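/- Let d ≥ 2 and n be integers. In the class of all semi-d-regular trees with boundary with n vertices (trees with boundary in which every interior vertex has degree exactly d and every boundary vertex has degree 1), a tree G has the Faber-Krahn property if and only if it is an SLO*-tree, and G is then uniquely determined up to isomorphism. -/

import Mathlib

/-!
Common definitions for Faber-Krahn type inequalities for trees
(Bıyıkoğlu–Leydold, "Faber-Krahn Type Inequalities for Trees").

A *tree (graph) with boundary* is a finite simple connected graph in which
boundary vertices are exactly the vertices of degree 1 and interior vertices
are the vertices of degree ≥ 2; both sets are required to be nonempty.
The Dirichlet operator is the Laplacian restricted to functions vanishing on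
the boundary; `dirichletLambda` is its smallest eigenvalue.
-/

open Finset
open scoped Classical

noncomputable section

namespace FK

variable {V : Type*} [Fintype V] [DecidableEq V]

/-- A vertex is a boundary vertex iff it has degree `1`. -/
def IsBoundary (G : SimpleGraph V) (v : V) : Prop := G.degree v = 1

/-- A vertex is an interior vertex iff it has degree at least `2`. -/
def IsInterior (G : SimpleGraph V) (v : V) : Prop := 2 ≤ G.degree v

/-- A tree with boundary: a tree with at least one interior and
one boundary vertex. -/
def IsTreeWithBoundary (G : SimpleGraph V) : Prop :=
  G.IsTree ∧ (∃ v, IsInterior G v) ∧ (∃ v, IsBoundary G v)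

/-- A connected graph with boundary: every vertex is either a boundary vertex
(degree 1) or an interior vertex (degree ≥ 2), both kinds occur, and no edge
joins two boundary vertices. -/
def IsGraphWithBoundary (G : SimpleGraph V) : Prop :=
  G.Connected ∧ (∀ v, IsBoundary G v ∨ IsInterior G v) ∧
    (∃ v, IsInterior G v) ∧ (∃ v, IsBoundary G v) ∧
    (∀ v w, G.Adj v w → IsBoundary G v → ¬ IsBoundary G w)

/-- The finset of interior vertices. -/
def interiorFinset (G : SimpleGraph V) : Finset V := univ.filter (fun v => IsInterior G v)

/-- The finset of boundary vertices. -/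
def boundaryFinset (G : SimpleGraph V) : Finset V := univ.filter (fun v => IsBoundary G v)

/-- The degree sequence of `G`, as a multiset. -/
def degreeMultiset (G : SimpleGraph V) : Multiset ℕ := Finset.univ.val.map (fun v => G.degree v)

/-- The graph Laplacian `Δ = D - A` applied to a function `f : V → ℝ`. -/
def lapApply (G : SimpleGraph V) (f : V → ℝ) (v : V) : ℝ :=
  (G.degree v : ℝ) * f v - ∑ w ∈ G.neighborFinset v, f w

/-- `f` (vanishing on the boundary, nonzero) is an eigenfunction of the
Dirichlet operator `Δ₀` with eigenvalue `μ`: the eigenvalue equation holds at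
every interior vertex. -/
def IsDirichletEigenpair (G : SimpleGraph V) (μ : ℝ) (f : V → ℝ) : Prop :=
  f ≠ 0 ∧ (∀ v, IsBoundary G v → f v = 0) ∧
    ∀ v, IsInterior G v → lapApply G f v = μ * f v

/-- The first (smallest) Dirichlet eigenvalue `λ(G)`. -/
def dirichletLambda (G : SimpleGraph V) : ℝ :=
  sInf {μ : ℝ | ∃ f : V → ℝ, IsDirichletEigenpair G μ f}

/-- The quadratic form `⟨Δ f, f⟩ = Σ_{(u,v)∈E} (f u - f v)²` of the Laplacian
(each edge counted once). -/
def quadForm (G : SimpleGraph V) (f : V → ℝ) : ℝ :=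
  (∑ v, ∑ w ∈ G.neighborFinset v, (f v - f w) ^ 2) / 2

/-- The Rayleigh quotient `R_G(f)`. -/
def rayleigh (G : SimpleGraph V) (f : V → ℝ) : ℝ :=
  quadForm G f / ∑ v, f v ^ 2

/-- `w` is a child of `v` in the tree `G` rooted at `v₀`
(heights are distances from the root `v₀`). -/
def IsChild (G : SimpleGraph V) (v₀ v w : V) : Prop :=
  G.Adj v w ∧ G.dist v₀ w = G.dist v₀ v + 1

/-- A spiral-like ordering (SLO-ordering) of the vertices of the tree `G`
rooted at `v₀`: a (strict) well-ordering `lt` satisfying (S1)-(S3). -/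
def IsSLOOrdering (G : SimpleGraph V) (v₀ : V) (lt : V → V → Prop) : Prop :=
  IsStrictTotalOrder V lt ∧
  (∀ v w, lt v w → G.dist v₀ v ≤ G.dist v₀ w) ∧
  (∀ v₁ v₂ w₁ w₂, lt v₁ v₂ → IsChild G v₀ v₁ w₁ → IsChild G v₀ v₂ w₂ → lt w₁ w₂) ∧
  (∀ v w, lt v w → IsBoundary G v → IsBoundary G w)

/-- A spiral-like ordering with increasing degrees (SLO*-ordering):
additionally (S4). -/
def IsSLOStarOrdering (G : SimpleGraph V) (v₀ : V) (lt : V → V → Prop) : Prop :=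
  IsSLOOrdering G v₀ lt ∧
  ∀ v w, lt v w → IsInterior G v → IsInterior G w → G.degree v ≤ G.degree w

/-- An SLO-tree: a tree with boundary admitting an SLO-ordering. -/
def IsSLOTree (G : SimpleGraph V) : Prop :=
  IsTreeWithBoundary G ∧ ∃ (v₀ : V) (lt : V → V → Prop), IsSLOOrdering G v₀ lt

/-- An SLO*-tree: a tree with boundary admitting an SLO*-ordering. -/
def IsSLOStarTree (G : SimpleGraph V) : Prop :=
  IsTreeWithBoundary G ∧ ∃ (v₀ : V) (lt : V → V → Prop), IsSLOStarOrdering G v₀ lt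

end FK

namespace FK

/-- Membership in the class of semi-`d`-regular trees with boundary on `n`
vertices: trees with boundary in which every interior vertex has degree
exactly `d` (boundary vertices have degree `1` by definition). -/
def inClassSemiRegular (d : ℕ) {n : ℕ} (G : SimpleGraph (Fin n)) : Prop :=
  IsTreeWithBoundary G ∧ ∀ v, IsInterior G v → G.degree v = d

/-- The Faber-Krahn property in the class of semi-`d`-regular trees with
boundary on `n` vertices. -/
def hasFKSemiRegular (d : ℕ) {n : ℕ} (G : SimpleGraph (Fin n)) : Prop :=
  inClassSemiRegular d G ∧ ∀ G' : SimpleGraph (Fin n), inClassSemiRegular d G' →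
    dirichletLambda G ≤ dirichletLambda G'

/-!
Root every tree at the vertex `0` of `Fin n` and describe it by its parent function `p`. The
quadratic form is then a sum over degrees minus `2 * ∑ v, f v * f (p v)`, and the degrees prescribe
the sizes of the fibres of `p`. If `f` is non-increasing, the rearrangement inequality says that a
monotone parent function, which is what a spiral-like ordering provides, minimises this form.

In the semi-regular class all trees have the same number of interior vertices. Number the vertices
of a competitor `G` so that its nonnegative first Dirichlet eigenfunction `f` is non-increasing.
Since `f` is positive exactly on the interior, the interior is an initial segment and `G` has the
same degree function as the spiral-like tree `B`, so `f` is a test function for `B` and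
`λ(B) ≤ λ(G)`.

If equality holds, `f` is an eigenfunction of both trees, so the sums of `f` over the children of a
vertex agree as soon as its parents agree. Working through the vertices in order, transpositions of
vertices with equal values of `f` make the parent function of `G` coincide with that of `B`.
-/

/-! ### Finite sums and orderings -/

lemma exists_perm_comp_eq_of_card_fiber_eq {ι κ : Type*} [Fintype ι] [DecidableEq κ] {p q : ι → κ}
    (h : ∀ c, #{i | p i = c} = #{i | q i = c}) : ∃ π : Equiv.Perm ι, p = q ∘ π := by
  have e : ∀ c, Nonempty ({i // p i = c} ≃ {i // q i = c}) := fun c =>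
    Fintype.card_eq.1 (by simpa only [Fintype.card_subtype] using h c)
  exact ⟨Equiv.ofFiberEquiv fun c => (e c).some, funext fun i => (Equiv.ofFiberEquiv_map _ i).symm⟩

lemma sum_mul_comp_le_of_card_fiber_eq {ι κ : Type*} [Fintype ι] [DecidableEq κ] {f : ι → ℝ}
    {u : κ → ℝ} {p q : ι → κ} (hf : Monovary f (u ∘ q)) (h : ∀ c, #{i | p i = c} = #{i | q i = c}) :
    ∑ i, f i * u (p i) ≤ ∑ i, f i * u (q i) := by
  obtain ⟨π, rfl⟩ := exists_perm_comp_eq_of_card_fiber_eq h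
  exact hf.sum_mul_comp_perm_le_sum_mul

lemma exists_eq_of_sum_eq_of_antitone {ι : Type*} [LinearOrder ι] {f : ι → ℝ} (hf : Antitone f)
    {s t : Finset ι} (hcard : #s = #t) (hsum : ∑ i ∈ s, f i = ∑ i ∈ t, f i)
    (hlt : ∀ i ∈ s \ t, ∀ j ∈ t \ s, i ≤ j) {i : ι} (hi : i ∈ s \ t) :
    ∃ j ∈ t \ s, f j = f i := by
  have hcard' : #(s \ t) = #(t \ s) := card_sdiff_comm hcard
  have hsum' : ∑ k ∈ s \ t, f k = ∑ k ∈ t \ s, f k := sum_sdiff_eq_sum_sdiff_iff.2 hsum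
  obtain ⟨j, hj⟩ : (t \ s).Nonempty := card_pos.1 (hcard' ▸ card_pos.2 ⟨i, hi⟩)
  obtain ⟨m, hm, hmax⟩ := exists_max_image (t \ s) f ⟨j, hj⟩
  refine ⟨m, hm, (hf (hlt i hi m hm)).antisymm ?_⟩
  by_contra! hlt'
  have hlow : #(s \ t) • f m < ∑ k ∈ s \ t, f k := by
    rw [← sum_const]
    exact sum_lt_sum (fun k hk => hf (hlt k hk m hm)) ⟨i, hi, hlt'⟩
  have hup : ∑ k ∈ t \ s, f k ≤ #(t \ s) • f m := sum_le_card_nsmul _ _ _ hmax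
  rw [hcard', hsum'] at hlow
  exact hlow.not_ge hup

lemma exists_equiv_fin_of_isStrictTotalOrder {V : Type*} [Fintype V] {n : ℕ}
    (hn : Fintype.card V = n) (lt : V → V → Prop) [IsStrictTotalOrder V lt] :
    ∃ σ : Fin n ≃ V, ∀ i j, lt (σ i) (σ j) ↔ i < j := by
  let _ := linearOrderOfSTO lt
  let e := Fintype.orderIsoFinOfCardEq V hn
  exact ⟨e.toEquiv, fun i j => e.lt_iff_lt⟩

lemma mem_iff_lt_card_of_isLowerSet {n : ℕ} {s : Finset (Fin n)} (hs : IsLowerSet (s : Set (Fin n)))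
    (i : Fin n) : i ∈ s ↔ (i : ℕ) < #s := by
  constructor
  · intro hi
    have h : Finset.Iic i ⊆ s := fun j hj => hs (mem_Iic.1 hj) hi
    have := card_le_card h
    rwa [Fin.card_Iic, Nat.succ_le_iff] at this
  · contrapose!
    intro hi
    have h : s ⊆ Finset.Iio i := fun j hj =>
      mem_Iio.2 (lt_of_not_ge fun hij => hi (hs hij hj))
    simpa using card_le_card h

/-! ### The Laplacian -/

section Laplacian

variable {V : Type*} [Fintype V] (G : SimpleGraph V)

lemma lapMatrix_mulVec [DecidableEq V] (f : V → ℝ) :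
    Matrix.mulVec (G.lapMatrix ℝ) f = lapApply G f :=
  funext fun v => G.lapMatrix_mulVec_apply v f

lemma sum_mul_lapApply (f : V → ℝ) : ∑ v, f v * lapApply G f v = quadForm G f := by
  have h := G.lapMatrix_toLinearMap₂' ℝ f
  rw [Matrix.toLinearMap₂'_apply', lapMatrix_mulVec] at h
  simpa only [quadForm, dotProduct, SimpleGraph.neighborFinset_eq_filter, sum_filter] using h

end Laplacian

/-! ### Rooted trees -/

section ParentFunction

variable {V : Type*} {G : SimpleGraph V} {r : V} {p : V → V}

/-- `p` sends each vertex of the tree `G` with root `r` to its parent, and the root to itself. -/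
structure IsParentFun (G : SimpleGraph V) (r : V) (p : V → V) : Prop where
  map_root : p r = r
  adj_iff : ∀ u v, G.Adj u v ↔ u ≠ v ∧ (p u = v ∨ p v = u)
  dist_eq : ∀ v ≠ r, G.dist r v = G.dist r (p v) + 1

lemma dist_eq_dist_penultimate_add_one {v : V} (hv : v ≠ r) {P : G.Walk r v}
    (hP : P.length = G.dist r v) : G.dist r v = G.dist r P.penultimate + 1 := by
  have hdrop : P.dropLast.length = G.dist r P.penultimate :=
    SimpleGraph.length_eq_dist_of_subwalk hP (P.isSubwalk_take _)
  rw [← hP, ← hdrop,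
    SimpleGraph.Walk.length_dropLast_add_one (SimpleGraph.Walk.not_nil_of_ne hv.symm)]

lemma exists_isParentFun (hG : G.IsTree) (r : V) : ∃ p, IsParentFun G r p := by
  choose P hP hlen using hG.connected.exists_path_of_dist r
  have adj_penultimate : ∀ v ≠ r, G.Adj (P v).penultimate v := fun v hv =>
    (P v).adj_penultimate (SimpleGraph.Walk.not_nil_of_ne hv.symm)
  have map_root : (P r).penultimate = r := by
    have := (SimpleGraph.Walk.isPath_iff_nil.1 (hP r)).eq_nil
    rw [this, SimpleGraph.Walk.penultimate_nil]
  refine ⟨fun v => (P v).penultimate, map_root, fun u v => ⟨fun h => ⟨h.ne, ?_⟩, ?_⟩,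
    fun v hv => ?_⟩
  · by_cases hu : u ∈ (P v).support
    · exact .inr (hG.isAcyclic.eq_penultimate_of_adj_end (hP v) h.symm hu).symm
    · exact .inl (hG.isAcyclic.eq_penultimate_of_adj_end (hP u) h
        (hG.isAcyclic.mem_support_of_ne_mem_support_of_adj_of_isPath (hP u) (hP v) h hu)).symm
  · rintro ⟨huv, rfl | rfl⟩
    · exact (adj_penultimate u fun hu => huv (by rw [hu, map_root])).symm
    · exact adj_penultimate v fun hv => huv (by rw [hv, map_root])
  · exact dist_eq_dist_penultimate_add_one hv (hlen v)

namespace IsParentFun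

lemma adj (hp : IsParentFun G r p) {v : V} (hv : v ≠ r) : G.Adj (p v) v := by
  refine (hp.adj_iff _ _).2 ⟨fun h => ?_, .inr rfl⟩
  have := hp.dist_eq v hv
  rw [h] at this
  lia

lemma parent_parent_ne (hp : IsParentFun G r p) {v : V} (hv : v ≠ r) : p (p v) ≠ v := by
  intro h
  have hpv : p v ≠ r := by
    intro hr
    rw [hr, hp.map_root] at h
    exact hv h.symm
  have h₁ := hp.dist_eq v hv
  have h₂ := hp.dist_eq (p v) hpv
  rw [h] at h₂
  lia

lemma isChild_iff (hp : IsParentFun G r p) {v w : V} :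
    IsChild G r v w ↔ w ≠ r ∧ p w = v := by
  constructor
  · rintro ⟨hvw, hdist⟩
    refine ⟨?_, ?_⟩
    · rintro rfl
      simp at hdist
    · obtain ⟨-, rfl | h⟩ := (hp.adj_iff _ _).1 hvw
      · by_cases hv : v = r
        · rw [hv, hp.map_root] at hvw
          exact absurd rfl hvw.ne
        · have := hp.dist_eq v hv
          lia
      · exact h
  · rintro ⟨hw, rfl⟩
    exact ⟨hp.adj hw, hp.dist_eq w hw⟩

lemma sum_fiber_add [Fintype V] [DecidableEq V] {M : Type*} [AddCommMonoid M]
    (hp : IsParentFun G r p) (g : V → M) (v : V) :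
    ∑ w with p w = v, g w + g (p v) =
      ∑ w ∈ G.neighborFinset v, g w + if v = r then 2 • g r else 0 := by
  by_cases hv : v = r
  · subst hv
    have hfiber : univ.filter (fun w => p w = v) = insert v (G.neighborFinset v) := by
      ext w
      have := hp.map_root
      simp only [mem_filter, mem_univ, true_and, mem_insert, SimpleGraph.mem_neighborFinset,
        hp.adj_iff]
      grind
    rw [hfiber, sum_insert (by simp), hp.map_root, if_pos rfl, two_nsmul]
    abel
  · have hneighbor : G.neighborFinset v = insert (p v) (univ.filter fun w => p w = v) := by
      ext w
      have := hp.adj hv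
      have := hp.adj_iff v w
      simp only [mem_filter, mem_univ, true_and, mem_insert, SimpleGraph.mem_neighborFinset]
      grind [G.adj_comm, G.irrefl]
    rw [hneighbor, sum_insert (by simpa using hp.parent_parent_ne hv), if_neg hv, add_zero,
      add_comm]

lemma card_fiber_add_one [Fintype V] [DecidableEq V] (hp : IsParentFun G r p) (v : V) :
    #{w | p w = v} + 1 = G.degree v + if v = r then 2 else 0 := by
  simpa using hp.sum_fiber_add (fun _ => (1 : ℕ)) v

lemma quadForm_eq [Fintype V] (hp : IsParentFun G r p) (f : V → ℝ) :
    quadForm G f = ∑ v, G.degree v * f v ^ 2 + 2 * f r ^ 2 - 2 * ∑ v, f v * f (p v) := by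
  have hneighbor : ∑ v, f v * ∑ w ∈ G.neighborFinset v, f w =
      2 * ∑ v, f v * f (p v) - 2 * f r ^ 2 := by
    have hfiber : ∑ v, f v * ∑ w with p w = v, f w = ∑ w, f w * f (p w) := by
      simp_rw [mul_sum, sum_filter]
      rw [sum_comm]
      simp [mul_comm]
    have hsum : ∑ v, f v * (∑ w with p w = v, f w + f (p v)) =
        ∑ v, f v * (∑ w ∈ G.neighborFinset v, f w + if v = r then 2 • f r else 0) :=
      sum_congr rfl fun v _ => by rw [hp.sum_fiber_add f v]
    simp only [mul_add, sum_add_distrib, hfiber, mul_ite, mul_zero, sum_ite_eq', mem_univ, if_true,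
      nsmul_eq_mul, Nat.cast_ofNat] at hsum
    linarith
  rw [← sum_mul_lapApply]
  simp only [lapApply, mul_sub, sum_sub_distrib, hneighbor]
  rw [sum_congr rfl fun v _ => show f v * (G.degree v * f v) = G.degree v * f v ^ 2 by ring]
  ring

lemma two_mul_card [Fintype V] (hp : IsParentFun G r p) :
    2 * Fintype.card V = ∑ v, G.degree v + 2 := by
  have hfiber : ∑ v, #{w | p w = v} = Fintype.card V := by
    rw [← card_univ, card_eq_sum_card_fiberwise fun v _ => mem_univ (p v)]
  have hsum : ∑ v, (#{w | p w = v} + 1) = ∑ v, (G.degree v + if v = r then 2 else 0) :=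
    sum_congr rfl fun v _ => hp.card_fiber_add_one v
  simp only [sum_add_distrib, hfiber, sum_const, card_univ, smul_eq_mul, mul_one, sum_ite_eq',
    mem_univ, if_true] at hsum
  lia

lemma reachable (hp : IsParentFun G r p) (v : V) : G.Reachable r v := by
  by_cases hv : v = r
  · rw [hv]
  · exact .of_dist_ne_zero (by rw [hp.dist_eq v hv]; lia)

lemma connected (hp : IsParentFun G r p) : G.Connected :=
  have : Nonempty V := ⟨r⟩
  ⟨fun u v => (hp.reachable u).symm.trans (hp.reachable v)⟩

lemma isTree [Finite V] (hp : IsParentFun G r p) : G.IsTree := by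
  have := Fintype.ofFinite V
  refine SimpleGraph.isTree_iff_connected_and_card.2 ⟨hp.connected, ?_⟩
  have h := hp.two_mul_card
  rw [SimpleGraph.sum_degrees_eq_twice_card_edges] at h
  rw [Nat.card_eq_fintype_card, Nat.card_eq_fintype_card, ← SimpleGraph.edgeFinset_card]
  lia

/-- `h` shows that iterating `p` leads to the root; it need not be the distance. -/
lemma of_lt (hroot : p r = r) (hadj : ∀ u v, G.Adj u v ↔ u ≠ v ∧ (p u = v ∨ p v = u)) (h : V → ℕ)
    (hlt : ∀ v ≠ r, h (p v) < h v) : IsParentFun G r p := by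
  have adj : ∀ v ≠ r, G.Adj (p v) v := fun v hv =>
    (hadj _ _).2 ⟨fun heq => (hlt v hv).ne (by rw [heq]), .inr rfl⟩
  have reachable : ∀ v, G.Reachable r v := by
    intro v
    induction hv : h v using Nat.strong_induction_on generalizing v with
    | _ m ih =>
      by_cases hvr : v = r
      · rw [hvr]
      · exact (ih _ (hv ▸ hlt v hvr) (p v) rfl).trans (adj v hvr).reachable
  refine ⟨hroot, hadj, fun v => ?_⟩
  induction hm : G.dist r v using Nat.strong_induction_on generalizing v with
  | _ m ih =>
    intro hv
    obtain ⟨P, -, hP⟩ := (reachable v).exists_path_of_dist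
    have hdist := dist_eq_dist_penultimate_add_one hv hP
    have hpen : G.Adj P.penultimate v := P.adj_penultimate (SimpleGraph.Walk.not_nil_of_ne hv.symm)
    obtain ⟨-, h' | h'⟩ := (hadj _ _).1 hpen
    · have hne : P.penultimate ≠ r := fun heq => hv (by rw [← h', heq, hroot])
      have := ih _ (by lia) _ rfl hne
      rw [h'] at this
      lia
    · rw [h', ← hm, hdist]

lemma parent_lt {n : ℕ} [NeZero n] {G : SimpleGraph (Fin n)} {p : Fin n → Fin n}
    (hp : IsParentFun G 0 p) (hmono : Monotone p) {v : Fin n} (hv : v ≠ 0) : p v < v := by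
  induction hm : G.dist 0 v using Nat.strong_induction_on generalizing v with
  | _ m ih =>
    by_contra! hle
    have hpv : p v ≠ 0 := fun h => hv (nonpos_iff_eq_zero.1 (h ▸ hle))
    exact (ih _ (by rw [← hm, hp.dist_eq v hv]; lia) hpv rfl).not_ge (hmono hle)

lemma monotone_dist {n : ℕ} [NeZero n] {G : SimpleGraph (Fin n)} {p : Fin n → Fin n}
    (hp : IsParentFun G 0 p) (hmono : Monotone p) : Monotone (G.dist 0) := by
  intro i j
  induction j using WellFoundedLT.induction generalizing i with
  | ind j ih =>
    intro hij
    by_cases hi : i = 0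
    · simp [hi]
    · have hj : j ≠ 0 := fun hj => hi (nonpos_iff_eq_zero.1 (hj ▸ hij))
      rw [hp.dist_eq i hi, hp.dist_eq j hj]
      exact Nat.succ_le_succ (ih _ (hp.parent_lt hmono hj) (hmono hij))

lemma card_fiber_eq [Fintype V] [DecidableEq V] {B : SimpleGraph V} {q : V → V}
    (hp : IsParentFun G r p) (hq : IsParentFun B r q) (hdeg : ∀ v, B.degree v = G.degree v)
    (v : V) : #{w | p w = v} = #{w | q w = v} := by
  have h₁ := hp.card_fiber_add_one v
  have h₂ := hq.card_fiber_add_one v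
  rw [hdeg] at h₂
  lia

lemma quadForm_le_of_monotone [Fintype V] [LinearOrder V] {B : SimpleGraph V} {q : V → V}
    (hp : IsParentFun G r p) (hq : IsParentFun B r q) (hmono : Monotone q)
    (hdeg : ∀ v, B.degree v = G.degree v) {f : V → ℝ} (hf : Antitone f) :
    quadForm B f ≤ quadForm G f := by
  have hle := sum_mul_comp_le_of_card_fiber_eq (hf.monovary (hf.comp_monotone hmono))
    (hp.card_fiber_eq hq hdeg)
  rw [hp.quadForm_eq, hq.quadForm_eq]
  simp only [hdeg]
  linarith

end IsParentFun

end ParentFunction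

/-! ### Invariance under isomorphism -/

section Iso

lemma dist_iso {V W : Type*} {G : SimpleGraph V} {H : SimpleGraph W} (e : G ≃g H)
    (hG : G.Connected) (u v : V) : H.dist (e u) (e v) = G.dist u v := by
  have hH : H.Connected := e.connected_iff.1 hG
  refine le_antisymm ?_ ?_
  · obtain ⟨P, hP⟩ := hG.exists_walk_length_eq_dist u v
    rw [← hP, ← P.length_map e.toHom]
    exact SimpleGraph.dist_le _
  · obtain ⟨P, hP⟩ := hH.exists_walk_length_eq_dist (e u) (e v)
    rw [← hP, ← P.length_map e.symm.toHom]
    simpa using SimpleGraph.dist_le (P.map e.symm.toHom)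

lemma IsParentFun.map {V W : Type*} {G : SimpleGraph V} {H : SimpleGraph W} {r : V} {p : V → V}
    (hp : IsParentFun G r p) (e : G ≃g H) : IsParentFun H (e r) (e ∘ p ∘ e.symm) where
  map_root := by simp [hp.map_root]
  adj_iff u v := by
    rw [← e.symm.map_adj_iff, hp.adj_iff]
    simp [EmbeddingLike.apply_eq_iff_eq, ← e.eq_symm_apply]
  dist_eq v hv := by
    have hv' : e.symm v ≠ r := fun h => hv (by rw [← h, e.apply_symm_apply])
    have hG := hp.connected
    simpa [dist_iso e hG] using (dist_iso e hG r (e.symm v)).trans (hp.dist_eq _ hv')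

variable {V W : Type*} [Fintype V] [Fintype W] {G : SimpleGraph V} {H : SimpleGraph W}

lemma lapApply_iso (e : G ≃g H) (f : W → ℝ) (v : V) :
    lapApply G (f ∘ e) v = lapApply H f (e v) := by
  have hsum : ∑ w ∈ G.neighborFinset v, f (e w) = ∑ w ∈ H.neighborFinset (e v), f w :=
    sum_equiv e.toEquiv (fun w => by simpa using e.map_adj_iff.symm) fun w _ => rfl
  simp only [lapApply, Function.comp_apply, e.degree_eq, hsum]

lemma IsDirichletEigenpair.comp_iso {μ : ℝ} {f : W → ℝ} (hf : IsDirichletEigenpair H μ f)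
    (e : G ≃g H) : IsDirichletEigenpair G μ (f ∘ e) := by
  obtain ⟨hne, hboundary, heigen⟩ := hf
  refine ⟨fun h => hne (funext fun v => ?_), fun v hv => hboundary _ ?_, fun v hv => ?_⟩
  · simpa using congrFun h (e.symm v)
  · rwa [IsBoundary, e.degree_eq]
  · rw [lapApply_iso]
    exact heigen _ (by rwa [IsInterior, e.degree_eq])

lemma dirichletLambda_iso (e : G ≃g H) : dirichletLambda G = dirichletLambda H := by
  unfold dirichletLambda
  congr 1
  ext μ
  exact ⟨fun ⟨_, hf⟩ => ⟨_, hf.comp_iso e.symm⟩, fun ⟨_, hf⟩ => ⟨_, hf.comp_iso e⟩⟩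

lemma IsTreeWithBoundary.map_iso (hG : IsTreeWithBoundary G) (e : G ≃g H) :
    IsTreeWithBoundary H := by
  obtain ⟨hT, ⟨v, hv⟩, w, hw⟩ := hG
  exact ⟨e.isTree_iff.1 hT, ⟨e v, by rwa [IsInterior, e.degree_eq]⟩,
    e w, by rwa [IsBoundary, e.degree_eq]⟩

lemma IsSLOOrdering.map_iso {r : V} {lt : V → V → Prop} (h : IsSLOOrdering G r lt)
    (hG : G.Connected) (e : G ≃g H) : IsSLOOrdering H (e r) (e.symm ⁻¹'o lt) := by
  obtain ⟨hlt, hdist, hchild, hboundary⟩ := h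
  have hH : H.Connected := e.connected_iff.1 hG
  have dist_symm : ∀ v, G.dist r (e.symm v) = H.dist (e r) v := fun v => by
    simpa using dist_iso e.symm hH (e r) v
  have isChild_symm : ∀ v w, IsChild H (e r) v w → IsChild G r (e.symm v) (e.symm w) :=
    fun v w ⟨hadj, hd⟩ => ⟨e.symm.map_adj_iff.2 hadj, by rw [dist_symm, dist_symm, hd]⟩
  refine ⟨(RelEmbedding.preimage e.symm.toEquiv.toEmbedding lt).isStrictTotalOrder,
    fun v w hvw => ?_, fun v₁ v₂ w₁ w₂ hv h₁ h₂ => ?_, fun v w hvw hv => ?_⟩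
  · simpa only [dist_symm] using hdist _ _ hvw
  · exact hchild _ _ _ _ hv (isChild_symm _ _ h₁) (isChild_symm _ _ h₂)
  · simpa only [IsBoundary, e.symm.degree_eq] using
      hboundary _ _ hvw (by rwa [IsBoundary, e.symm.degree_eq])

end Iso

/-! ### The first Dirichlet eigenvalue -/

section Dirichlet

lemma exists_eigenpair_posSemidef {ι : Type*} [Fintype ι] [DecidableEq ι] [Nonempty ι]
    {A : Matrix ι ι ℝ} (hA : A.IsHermitian) :
    ∃ (μ : ℝ) (x : ι → ℝ), x ≠ 0 ∧ A.mulVec x = μ • x ∧ (A - μ • 1).PosSemidef := by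
  obtain ⟨i, hi⟩ := Finite.exists_min hA.eigenvalues
  refine ⟨hA.eigenvalues i, hA.eigenvectorBasis i, ?_, hA.mulVec_eigenvectorBasis i, ?_⟩
  · exact fun h => hA.eigenvectorBasis.orthonormal.ne_zero i (WithLp.ofLp_injective 2 h)
  · refine Matrix.posSemidef_iff_isHermitian_and_spectrum_nonneg.2
      ⟨hA.sub (Matrix.isHermitian_one.smul (IsSelfAdjoint.all _)), ?_⟩
    rw [← Algebra.algebraMap_eq_smul_one, ← spectrum.sub_singleton_eq,
      hA.spectrum_real_eq_range_eigenvalues]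
    rintro _ ⟨_, ⟨j, rfl⟩, _, rfl, rfl⟩
    exact sub_nonneg.2 (hi j)

variable {V : Type*} [Fintype V] {G : SimpleGraph V}

/-- The Dirichlet operator `Δ₀`: the graph Laplacian with the rows and columns of the boundary
vertices deleted. -/
def dirichletMatrix (G : SimpleGraph V) : Matrix {v // IsInterior G v} {v // IsInterior G v} ℝ :=
  (G.lapMatrix ℝ).submatrix (↑) (↑)

lemma isBoundary_of_not_isInterior (hpos : ∀ v, 0 < G.degree v) {v : V} (hv : ¬IsInterior G v) :
    IsBoundary G v := by
  have := hpos v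
  unfold IsInterior at hv
  unfold IsBoundary
  lia

lemma IsBoundary.not_isInterior {v : V} (hv : IsBoundary G v) : ¬IsInterior G v := by
  unfold IsInterior
  rw [hv]
  lia

/-- The functions on which the Dirichlet operator acts: those vanishing on the boundary. -/
def IsDirichlet (G : SimpleGraph V) (f : V → ℝ) : Prop :=
  ∀ v, IsBoundary G v → f v = 0

lemma IsDirichlet.sum_eq_sum_interior (hpos : ∀ v, 0 < G.degree v) {f : V → ℝ}
    (hf : IsDirichlet G f) (g : V → ℝ) :
    ∑ v, g v * f v = ∑ v : {v // IsInterior G v}, g v * f v := by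
  rw [← sum_subtype (univ.filter (IsInterior G)) (by simp) fun v => g v * f v, sum_filter_of_ne]
  intro v _ hv
  by_contra hint
  exact hv (by rw [hf v (isBoundary_of_not_isInterior hpos hint), mul_zero])

lemma IsDirichlet.dirichletMatrix_mulVec (hpos : ∀ v, 0 < G.degree v) {f : V → ℝ}
    (hf : IsDirichlet G f) :
    (dirichletMatrix G).mulVec (fun v => f v) =
      fun v : {v // IsInterior G v} => lapApply G f v := by
  ext v
  rw [← lapMatrix_mulVec]
  exact (hf.sum_eq_sum_interior hpos (G.lapMatrix ℝ v)).symm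

lemma IsDirichlet.dotProduct_sub_smul_mulVec (hpos : ∀ v, 0 < G.degree v) {f : V → ℝ}
    (hf : IsDirichlet G f) (μ : ℝ) :
    (fun v : {v // IsInterior G v} => f v) ⬝ᵥ (dirichletMatrix G - μ • 1).mulVec (fun v => f v) =
      quadForm G f - μ * ∑ v, f v ^ 2 := by
  rw [Matrix.sub_mulVec, Matrix.smul_mulVec, Matrix.one_mulVec, dotProduct_sub, dotProduct_smul,
    hf.dirichletMatrix_mulVec hpos, ← sum_mul_lapApply]
  simp only [dotProduct, pow_two, mul_comm (f _) (lapApply G f _), hf.sum_eq_sum_interior hpos,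
    smul_eq_mul]

lemma IsDirichletEigenpair.isDirichlet {μ : ℝ} {f : V → ℝ} (hf : IsDirichletEigenpair G μ f) :
    IsDirichlet G f := hf.2.1

lemma IsDirichletEigenpair.quadForm_eq (hpos : ∀ v, 0 < G.degree v) {μ : ℝ} {f : V → ℝ}
    (hf : IsDirichletEigenpair G μ f) : quadForm G f = μ * ∑ v, f v ^ 2 := by
  rw [← sum_mul_lapApply, mul_sum]
  refine sum_congr rfl fun v _ => ?_
  by_cases hv : IsInterior G v
  · rw [hf.2.2 v hv]
    ring
  · rw [hf.isDirichlet v (isBoundary_of_not_isInterior hpos hv)]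
    ring

lemma sum_sq_pos_of_ne_zero {f : V → ℝ} (hf : f ≠ 0) : 0 < ∑ v, f v ^ 2 := by
  obtain ⟨v, hv⟩ := Function.ne_iff.1 hf
  exact sum_pos' (fun _ _ => sq_nonneg _) ⟨v, mem_univ v, sq_pos_of_ne_zero hv⟩

lemma mul_sum_sq_le_quadForm_of_posSemidef (hpos : ∀ v, 0 < G.degree v) {μ : ℝ}
    (hμ : (dirichletMatrix G - μ • 1).PosSemidef) {f : V → ℝ} (hf : IsDirichlet G f) :
    μ * ∑ v, f v ^ 2 ≤ quadForm G f := by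
  have h := hμ.dotProduct_mulVec_nonneg fun v => f v
  rw [star_trivial, hf.dotProduct_sub_smul_mulVec hpos] at h
  linarith

lemma exists_isDirichletEigenpair_posSemidef (hpos : ∀ v, 0 < G.degree v)
    (hint : ∃ v, IsInterior G v) : ∃ f, IsDirichletEigenpair G (dirichletLambda G) f ∧
      (dirichletMatrix G - dirichletLambda G • 1).PosSemidef := by
  have : Nonempty {v // IsInterior G v} := nonempty_subtype.2 hint
  obtain ⟨μ, x, hx, hμx, hμ⟩ := exists_eigenpair_posSemidef
    (A := dirichletMatrix G) (G.isHermitian_lapMatrix ℝ |>.submatrix _)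
  let f : V → ℝ := fun v => if hv : IsInterior G v then x ⟨v, hv⟩ else 0
  have hfx : (fun v : {v // IsInterior G v} => f v) = x := funext fun v => dif_pos v.2
  have hf : IsDirichlet G f := fun v hv => dif_neg hv.not_isInterior
  have hpair : IsDirichletEigenpair G μ f := by
    refine ⟨fun h => hx ?_, hf, fun v hv => ?_⟩
    · rw [← hfx, h]
      rfl
    · have := congrFun (hf.dirichletMatrix_mulVec hpos) ⟨v, hv⟩
      rw [hfx, hμx, ← hfx] at this
      exact this.symm
  have hleast : IsLeast {ν | ∃ g, IsDirichletEigenpair G ν g} μ := by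
    refine ⟨⟨f, hpair⟩, fun ν ⟨g, hg⟩ => ?_⟩
    have hle := mul_sum_sq_le_quadForm_of_posSemidef hpos hμ hg.isDirichlet
    rw [hg.quadForm_eq hpos] at hle
    exact le_of_mul_le_mul_right hle (sum_sq_pos_of_ne_zero hg.1)
  rw [dirichletLambda, hleast.csInf_eq]
  exact ⟨f, hpair, hμ⟩

lemma dirichletLambda_mul_sum_sq_le_quadForm (hpos : ∀ v, 0 < G.degree v)
    (hint : ∃ v, IsInterior G v) {f : V → ℝ} (hf : IsDirichlet G f) :
    dirichletLambda G * ∑ v, f v ^ 2 ≤ quadForm G f :=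
  have ⟨_, _, hpsd⟩ := exists_isDirichletEigenpair_posSemidef hpos hint
  mul_sum_sq_le_quadForm_of_posSemidef hpos hpsd hf

lemma isDirichletEigenpair_of_quadForm_le (hpos : ∀ v, 0 < G.degree v)
    (hint : ∃ v, IsInterior G v) {f : V → ℝ} (hf : IsDirichlet G f) (hne : f ≠ 0)
    (hle : quadForm G f ≤ dirichletLambda G * ∑ v, f v ^ 2) :
    IsDirichletEigenpair G (dirichletLambda G) f := by
  obtain ⟨-, -, hpsd⟩ := exists_isDirichletEigenpair_posSemidef hpos hint
  have hzero := (hpsd.dotProduct_mulVec_zero_iff fun v => f v).1 <| by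
    rw [star_trivial, hf.dotProduct_sub_smul_mulVec hpos,
      (dirichletLambda_mul_sum_sq_le_quadForm hpos hint hf).antisymm hle, sub_self]
  refine ⟨hne, hf, fun v hv => ?_⟩
  rw [Matrix.sub_mulVec, Matrix.smul_mulVec, Matrix.one_mulVec, hf.dirichletMatrix_mulVec hpos,
    sub_eq_zero] at hzero
  exact congrFun hzero ⟨v, hv⟩

lemma quadForm_abs_le (f : V → ℝ) : quadForm G (fun v => |f v|) ≤ quadForm G f := by
  unfold quadForm
  gcongr (∑ v, ∑ w ∈ _, ?_) / 2 with v _ w _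
  exact sq_le_sq.2 (abs_abs_sub_abs_le (f v) (f w))

lemma exists_isDirichletEigenpair_nonneg (hpos : ∀ v, 0 < G.degree v)
    (hint : ∃ v, IsInterior G v) :
    ∃ f, IsDirichletEigenpair G (dirichletLambda G) f ∧ ∀ v, 0 ≤ f v := by
  obtain ⟨f, hf, -⟩ := exists_isDirichletEigenpair_posSemidef hpos hint
  refine ⟨fun v => |f v|, isDirichletEigenpair_of_quadForm_le hpos hint (fun v hv => ?_)
    (fun h => hf.1 ?_) ?_, fun v => abs_nonneg _⟩
  · rw [hf.isDirichlet v hv, abs_zero]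
  · exact funext fun v => abs_eq_zero.1 (congrFun h v)
  · simpa only [sq_abs, hf.quadForm_eq hpos] using quadForm_abs_le (G := G) f

lemma IsDirichletEigenpair.pos_of_isInterior (hpos : ∀ v, 0 < G.degree v) (hG : G.Preconnected)
    {μ : ℝ} {f : V → ℝ} (hf : IsDirichletEigenpair G μ f) (hnonneg : ∀ v, 0 ≤ f v) {v : V}
    (hv : IsInterior G v) : 0 < f v := by
  have eq_zero_of_adj : ∀ u, IsInterior G u → f u = 0 → ∀ w, G.Adj u w → f w = 0 := by
    intro u hu hfu w huw
    have heq := hf.2.2 u hu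
    rw [lapApply, hfu, mul_zero, mul_zero, zero_sub, neg_eq_zero] at heq
    exact (sum_eq_zero_iff_of_nonneg fun w _ => hnonneg w).1 heq w (by simpa using huw)
  -- A leaf has no eigenvalue equation, so the vanishing of its neighbour is carried along as well.
  have propagate : ∀ u w, G.Adj u w → (f u = 0 ∧ ∀ x, G.Adj u x → f x = 0) →
      f w = 0 ∧ ∀ x, G.Adj w x → f x = 0 := by
    rintro u w huw ⟨hu, hnbr⟩
    refine ⟨hnbr w huw, fun x hx => ?_⟩
    by_cases hw : IsInterior G w
    · exact eq_zero_of_adj w hw (hnbr w huw) x hx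
    · obtain ⟨_, -, hunique⟩ := SimpleGraph.degree_eq_one_iff_existsUnique_adj.1
        (isBoundary_of_not_isInterior hpos hw)
      rw [hunique x hx, ← hunique u huw.symm, hu]
  refine (hnonneg v).lt_of_ne fun hv0 => hf.1 (funext fun w => ?_)
  obtain ⟨P⟩ := hG v w
  have hzero : f v = 0 ∧ ∀ x, G.Adj v x → f x = 0 := ⟨hv0.symm, eq_zero_of_adj v hv hv0.symm⟩
  clear hv hv0
  induction P with
  | nil => exact hzero.1
  | cons huw _ ih => exact ih (propagate _ _ huw hzero)

end Dirichlet

/-! ### Semi-regular trees and spiral-like orderings -/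

section SemiRegular

lemma IsTreeWithBoundary.degree_pos {V : Type*} [Fintype V] {G : SimpleGraph V}
    (hG : IsTreeWithBoundary G) (v : V) : 0 < G.degree v := by
  obtain ⟨hT, ⟨u, hu⟩, -⟩ := hG
  obtain ⟨w, huw⟩ := (G.degree_pos_iff_exists_adj u).1 (zero_lt_two.trans_le hu)
  have : Nontrivial V := ⟨u, w, huw.ne⟩
  exact hT.connected.preconnected.degree_pos_of_nontrivial v

variable {n d : ℕ} {G B : SimpleGraph (Fin n)}

lemma inClassSemiRegular.two_le (hG : inClassSemiRegular d G) : 2 ≤ d :=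
  have ⟨v, hv⟩ := hG.1.2.1
  hG.2 v hv ▸ hv

lemma inClassSemiRegular.degree_eq_ite (hG : inClassSemiRegular d G) (v : Fin n) :
    G.degree v = if IsInterior G v then d else 1 := by
  split_ifs with hv
  · exact hG.2 v hv
  · exact isBoundary_of_not_isInterior hG.1.degree_pos hv

lemma inClassSemiRegular.add_card_interiorFinset (hG : inClassSemiRegular d G) :
    n + #(interiorFinset G) = d * #(interiorFinset G) + 2 := by
  obtain ⟨v, -⟩ := hG.1.2.1
  obtain ⟨p, hp⟩ := exists_isParentFun hG.1.1 v
  have hdeg := hp.two_mul_card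
  have hcompl := card_filter_add_card_filter_not (s := univ) (IsInterior G)
  simp only [hG.degree_eq_ite, sum_ite, sum_const, smul_eq_mul, mul_one, card_univ,
    Fintype.card_fin] at hdeg hcompl
  rw [interiorFinset]
  lia

lemma inClassSemiRegular.card_interiorFinset_eq (hG : inClassSemiRegular d G)
    (hB : inClassSemiRegular d B) : #(interiorFinset G) = #(interiorFinset B) := by
  have h₁ := hG.add_card_interiorFinset
  have h₂ := hB.add_card_interiorFinset
  obtain ⟨e, rfl⟩ := Nat.exists_eq_add_of_le hG.two_le
  exact Nat.eq_of_mul_eq_mul_left (Nat.succ_pos e) (by lia)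

lemma inClassSemiRegular.degree_eq_of_isLowerSet (hG : inClassSemiRegular d G)
    (hB : inClassSemiRegular d B) (hGlow : IsLowerSet {v | IsInterior G v})
    (hBlow : IsLowerSet {v | IsInterior B v}) (v : Fin n) : B.degree v = G.degree v := by
  have isInterior_iff : ∀ {H : SimpleGraph (Fin n)}, IsLowerSet {v | IsInterior H v} →
      (IsInterior H v ↔ (v : ℕ) < #(interiorFinset H)) := fun {H} hH => by
    rw [← mem_iff_lt_card_of_isLowerSet (by simpa [interiorFinset] using hH)]
    simp [interiorFinset]
  rw [hB.degree_eq_ite, hG.degree_eq_ite, isInterior_iff hGlow, isInterior_iff hBlow,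
    hG.card_interiorFinset_eq hB]

lemma inClassSemiRegular.map_iso (hG : inClassSemiRegular d G) (e : G ≃g B) :
    inClassSemiRegular d B :=
  ⟨hG.1.map_iso e, fun v hv => by
    rw [← e.symm.degree_eq]
    exact hG.2 _ (by rwa [IsInterior, e.symm.degree_eq])⟩

lemma inClassSemiRegular.isSLOStarTree_iff (hG : inClassSemiRegular d G) :
    IsSLOStarTree G ↔ ∃ r lt, IsSLOOrdering G r lt :=
  ⟨fun ⟨_, r, lt, h⟩ => ⟨r, lt, h.1⟩, fun ⟨r, lt, h⟩ =>
    ⟨hG.1, r, lt, h, fun v w _ hv hw => (hG.2 v hv).trans_le (hG.2 w hw).ge⟩⟩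

lemma IsSLOOrdering.isLowerSet_isInterior {V : Type*} [Fintype V] [PartialOrder V]
    {B : SimpleGraph V} {r : V} (h : IsSLOOrdering B r (· < ·)) (hpos : ∀ v, 0 < B.degree v) :
    IsLowerSet {v | IsInterior B v} := by
  intro j i hij hj
  by_contra hi
  rcases hij.eq_or_lt with rfl | hlt
  · exact hi hj
  · exact (h.2.2.2 i j hlt (isBoundary_of_not_isInterior hpos hi)).not_isInterior hj

variable [NeZero n]

lemma IsSLOOrdering.exists_iso_lt {r : Fin n} {lt : Fin n → Fin n → Prop}
    (h : IsSLOOrdering G r lt) (hG : G.Connected) :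
    ∃ B : SimpleGraph (Fin n), Nonempty (B ≃g G) ∧ IsSLOOrdering B 0 (· < ·) := by
  have := h.1
  obtain ⟨σ, hσ⟩ := exists_equiv_fin_of_isStrictTotalOrder (Fintype.card_fin n) lt
  let e : G.comap σ ≃g G := .comap σ G
  have hlt : e.symm.symm ⁻¹'o lt = (· < ·) := funext₂ fun i j => propext (hσ i j)
  have hB : IsSLOOrdering (G.comap σ) (e.symm r) (· < ·) := hlt ▸ h.map_iso hG e.symm
  have hroot : e.symm r = 0 := by
    by_contra hne
    have hle := hB.2.1 0 (e.symm r) (Fin.pos_iff_ne_zero.2 hne)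
    rw [SimpleGraph.dist_self, nonpos_iff_eq_zero] at hle
    exact hne ((e.symm.connected_iff.1 hG).dist_eq_zero_iff.1 hle)
  exact ⟨G.comap σ, ⟨e⟩, hroot ▸ hB⟩

lemma IsSLOOrdering.monotone_parent {p : Fin n → Fin n} (h : IsSLOOrdering B 0 (· < ·))
    (hp : IsParentFun B 0 p) : Monotone p := by
  intro i j hij
  by_cases hi : i = 0
  · rw [hi, hp.map_root]
    exact Fin.zero_le _
  · have hj : j ≠ 0 := fun hj => hi (nonpos_iff_eq_zero.1 (hj ▸ hij))
    by_contra! hlt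
    exact (h.2.2.1 _ _ _ _ hlt (hp.isChild_iff.2 ⟨hj, rfl⟩) (hp.isChild_iff.2 ⟨hi, rfl⟩)).not_ge hij

end SemiRegular

section Existence

/-- The parent of the vertex `i` in the breadth-first numbering of the tree in which the root `0`
has `e + 1` children and every other interior vertex has `e`. -/
def breadthFirstParent (e : ℕ) {n : ℕ} (i : Fin n) : Fin n :=
  ⟨(i - 2) / e, ((Nat.div_le_self _ _).trans (Nat.sub_le _ _)).trans_lt i.isLt⟩

/-- The tree on `Fin n` whose parent function is `breadthFirstParent e`. -/
def breadthFirstTree (e n : ℕ) : SimpleGraph (Fin n) :=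
  .fromRel fun i j => breadthFirstParent e i = j

lemma monotone_breadthFirstParent (e n : ℕ) : Monotone (breadthFirstParent e (n := n)) :=
  fun _ _ hij => Nat.div_le_div_right (Nat.sub_le_sub_right hij 2)

lemma isParentFun_breadthFirstParent (e n : ℕ) [NeZero n] :
    IsParentFun (breadthFirstTree e n) 0 (breadthFirstParent e) := by
  refine .of_lt (Fin.ext (by simp [breadthFirstParent])) (fun u v => ?_) (fun i => i)
    fun i hi => ?_
  · simp [breadthFirstTree, SimpleGraph.fromRel_adj]
  · have := Nat.pos_of_ne_zero (Fin.val_ne_zero_iff.2 hi)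
    exact (Nat.div_le_self _ _).trans_lt (by lia)

lemma breadthFirstParent_lt {e k n : ℕ} (he : 0 < e) (hk : 0 < k) (hn : n = k * e + 2)
    (w : Fin n) : (breadthFirstParent e w : ℕ) < k :=
  (Nat.div_lt_iff_lt_mul he).2 (by have := Nat.mul_pos hk he; lia)

lemma card_fiber_breadthFirstParent {e n : ℕ} [NeZero n] (he : 0 < e) {v : Fin n}
    (hv : (v + 1) * e + 2 ≤ n) :
    #{w | breadthFirstParent e w = v} = e + if v = 0 then 2 else 0 := by
  have hfiber : ({w | breadthFirstParent e w = v} : Finset (Fin n)).map Fin.valEmbedding =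
      Ico (v * e + if v = 0 then 0 else 2) ((v + 1) * e + 2) := by
    ext w
    have hdiv : (w - 2) / e = v ↔ v * e ≤ w - 2 ∧ w - 2 < (v + 1) * e := by
      rw [← Nat.le_div_iff_mul_le he, ← Nat.div_lt_iff_lt_mul he]
      lia
    have hsucc := Nat.mul_pos (Nat.succ_pos v) he
    have hv0 : v ≠ 0 → 0 < v * e := fun h =>
      Nat.mul_pos (Nat.pos_of_ne_zero (Fin.val_ne_zero_iff.2 h)) he
    have hmem : w ∈ ({w | breadthFirstParent e w = v} : Finset (Fin n)).map Fin.valEmbedding ↔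
        w < n ∧ (w - 2) / e = v := by
      simp [breadthFirstParent, Fin.ext_iff, Fin.exists_iff, and_comm]
    rw [hmem, hdiv, mem_Ico]
    split_ifs with h
    · simp only [h, Fin.val_zero, zero_mul] at *
      lia
    · have := hv0 h
      lia
  rw [← card_map Fin.valEmbedding, hfiber, Nat.card_Ico, Nat.succ_mul]
  split_ifs <;> lia

lemma degree_breadthFirstTree {e k n : ℕ} (he : 0 < e) (hk : 0 < k) (hn : n = k * e + 2)
    (v : Fin n) : (breadthFirstTree e n).degree v = if (v : ℕ) < k then e + 1 else 1 := by
  have : NeZero n := ⟨by lia⟩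
  have h := (isParentFun_breadthFirstParent e n).card_fiber_add_one v
  split_ifs with hv
  · have hle : ((v : ℕ) + 1) * e ≤ k * e := Nat.mul_le_mul_right e hv
    rw [card_fiber_breadthFirstParent he (by lia)] at h
    lia
  · have hv0 : v ≠ 0 := fun h0 => hv (by rwa [h0])
    have hfiber : #{w | breadthFirstParent e w = v} = 0 :=
      card_eq_zero.2 (filter_eq_empty_iff.2 fun {w} _ hw =>
        hv (hw ▸ breadthFirstParent_lt he hk hn w))
    rw [hfiber, if_neg hv0] at h
    lia

lemma isInterior_breadthFirstTree_iff {e k n : ℕ} (he : 0 < e) (hk : 0 < k) (hn : n = k * e + 2)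
    (v : Fin n) : IsInterior (breadthFirstTree e n) v ↔ (v : ℕ) < k := by
  rw [IsInterior, degree_breadthFirstTree he hk hn]
  split_ifs <;> lia

lemma inClassSemiRegular_breadthFirstTree {e k n : ℕ} (he : 0 < e) (hk : 0 < k)
    (hn : n = k * e + 2) : inClassSemiRegular (e + 1) (breadthFirstTree e n) := by
  have : NeZero n := ⟨by lia⟩
  have hle : k ≤ k * e := Nat.le_mul_of_pos_right k he
  refine ⟨⟨(isParentFun_breadthFirstParent e n).isTree, ⟨0, ?_⟩, ⟨k, by lia⟩, ?_⟩, fun v hv => ?_⟩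
  · rwa [isInterior_breadthFirstTree_iff he hk hn]
  · rw [IsBoundary, degree_breadthFirstTree he hk hn, if_neg (lt_irrefl k)]
  · rw [isInterior_breadthFirstTree_iff he hk hn] at hv
    rw [degree_breadthFirstTree he hk hn, if_pos hv]

lemma IsParentFun.isSLOOrdering_lt {n : ℕ} [NeZero n] {B : SimpleGraph (Fin n)} {p : Fin n → Fin n}
    (hp : IsParentFun B 0 p) (hmono : Monotone p) (hpos : ∀ v, 0 < B.degree v)
    (hlow : IsLowerSet {v | IsInterior B v}) : IsSLOOrdering B 0 (· < ·) := by
  refine ⟨inferInstance, fun v w hvw => hp.monotone_dist hmono hvw.le,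
    fun v₁ v₂ w₁ w₂ hv h₁ h₂ => ?_, fun v w hvw hv => ?_⟩
  · rw [hp.isChild_iff] at h₁ h₂
    exact hmono.reflect_lt (by rwa [h₁.2, h₂.2])
  · exact isBoundary_of_not_isInterior hpos fun hw => hv.not_isInterior (hlow hvw.le hw)

lemma inClassSemiRegular.exists_isSLOOrdering_lt {d n : ℕ} [NeZero n]
    {G : SimpleGraph (Fin n)} (hG : inClassSemiRegular d G) :
    ∃ B : SimpleGraph (Fin n), inClassSemiRegular d B ∧ IsSLOOrdering B 0 (· < ·) := by
  obtain ⟨e, rfl⟩ := Nat.exists_eq_add_of_le' (Nat.one_le_of_lt hG.two_le)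
  have he : 0 < e := Nat.succ_lt_succ_iff.1 hG.two_le
  have hk : 0 < #(interiorFinset G) :=
    have ⟨v, hv⟩ := hG.1.2.1
    card_pos.2 ⟨v, by simpa [interiorFinset] using hv⟩
  have hn : n = #(interiorFinset G) * e + 2 := by
    have := hG.add_card_interiorFinset
    lia
  have hB := inClassSemiRegular_breadthFirstTree he hk hn
  refine ⟨breadthFirstTree e n, hB, (isParentFun_breadthFirstParent e n).isSLOOrdering_lt
    (monotone_breadthFirstParent e n) hB.1.degree_pos fun j i hij hj => ?_⟩
  exact (isInterior_breadthFirstTree_iff he hk hn i).2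
    (lt_of_le_of_lt hij ((isInterior_breadthFirstTree_iff he hk hn j).1 hj))

end Existence

/-! ### Comparison with the spiral-like tree -/

section Comparison

lemma isInterior_congr {V : Type*} [Fintype V] {G B : SimpleGraph V}
    (hdeg : ∀ v, B.degree v = G.degree v) (v : V) : IsInterior B v ↔ IsInterior G v := by
  rw [IsInterior, IsInterior, hdeg]

lemma isDirichlet_congr {V : Type*} [Fintype V] {G B : SimpleGraph V}
    (hdeg : ∀ v, B.degree v = G.degree v) {f : V → ℝ} : IsDirichlet B f ↔ IsDirichlet G f := by
  simp only [IsDirichlet, IsBoundary, hdeg]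

lemma IsParentFun.isInterior_parent {V : Type*} [Fintype V] {G : SimpleGraph V} {r : V} {p : V → V}
    (hp : IsParentFun G r p) (hr : IsInterior G r) (v : V) : IsInterior G (p v) := by
  by_cases hpv : p v = r
  · rwa [hpv]
  · have hcard := hp.card_fiber_add_one (p v)
    have hpos : 0 < #{w | p w = p v} := card_pos.2 ⟨v, by simp⟩
    rw [if_neg hpv] at hcard
    unfold IsInterior
    lia

lemma IsParentFun.sum_fiber_eq {V : Type*} [Fintype V] [DecidableEq V] {G B : SimpleGraph V} {r : V}
    {p q : V → V} (hp : IsParentFun G r p) (hq : IsParentFun B r q)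
    (hdeg : ∀ v, B.degree v = G.degree v) {μ : ℝ} {f : V → ℝ} (hG : IsDirichletEigenpair G μ f)
    (hB : IsDirichletEigenpair B μ f) {v : V} (hv : IsInterior B v) (hpq : p v = q v) :
    ∑ w with p w = v, f w = ∑ w with q w = v, f w := by
  have heq : lapApply G f v = lapApply B f v := by
    rw [hG.2.2 v ((isInterior_congr hdeg v).1 hv), hB.2.2 v hv]
  rw [lapApply, lapApply, hdeg, sub_right_inj] at heq
  have hGsum := hp.sum_fiber_add f v
  rw [heq, ← hq.sum_fiber_add f v, hpq] at hGsum
  exact add_right_cancel hGsum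

/-- `f` is a nonnegative eigenfunction for the first Dirichlet eigenvalue of `G`, and the vertices
are numbered so that `f` is non-increasing. -/
structure IsSortedGroundState {V : Type*} [Fintype V] [Preorder V] (G : SimpleGraph V)
    (f : V → ℝ) : Prop where
  eigenpair : IsDirichletEigenpair G (dirichletLambda G) f
  nonneg : ∀ v, 0 ≤ f v
  antitone : Antitone f

namespace IsSortedGroundState

variable {V : Type*} [Fintype V] [Preorder V] {G G' : SimpleGraph V} {f : V → ℝ}

lemma comp_iso (hf : IsSortedGroundState G f) (e : G' ≃g G)
    (hfe : f ∘ e = f) : IsSortedGroundState G' f :=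
  ⟨by simpa only [hfe, dirichletLambda_iso e] using hf.eigenpair.comp_iso e, hf.nonneg, hf.antitone⟩

lemma isLowerSet_isInterior (hf : IsSortedGroundState G f) (hG : IsTreeWithBoundary G) :
    IsLowerSet {v | IsInterior G v} := by
  intro j i hij hj
  have hfj := hf.eigenpair.pos_of_isInterior hG.degree_pos hG.1.connected.preconnected hf.nonneg hj
  by_contra hi
  have hfi := hf.eigenpair.isDirichlet i (isBoundary_of_not_isInterior hG.degree_pos hi)
  exact (hfj.trans_le (hf.antitone hij)).ne' hfi

end IsSortedGroundState

variable {n d : ℕ} {G B : SimpleGraph (Fin n)} {f : Fin n → ℝ}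

lemma exists_iso_isSortedGroundState (hpos : ∀ v, 0 < G.degree v) (hint : ∃ v, IsInterior G v) :
    ∃ (G' : SimpleGraph (Fin n)) (f : Fin n → ℝ),
      Nonempty (G' ≃g G) ∧ IsSortedGroundState G' f := by
  obtain ⟨f, hf, hnonneg⟩ := exists_isDirichletEigenpair_nonneg hpos hint
  let σ := Tuple.sort (OrderDual.toDual ∘ f)
  let e : G.comap σ ≃g G := .comap σ G
  refine ⟨G.comap σ, f ∘ σ, ⟨e⟩, dirichletLambda_iso e ▸ hf.comp_iso e, fun v => hnonneg _, ?_⟩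
  exact Tuple.monotone_sort (OrderDual.toDual ∘ f)

namespace IsSortedGroundState

lemma degree_eq (hf : IsSortedGroundState G f) (hG : inClassSemiRegular d G)
    (hB : inClassSemiRegular d B) {r : Fin n} (hlt : IsSLOOrdering B r (· < ·)) (v : Fin n) :
    B.degree v = G.degree v :=
  hG.degree_eq_of_isLowerSet hB (hf.isLowerSet_isInterior hG.1)
    (hlt.isLowerSet_isInterior hB.1.degree_pos) v

variable [NeZero n]

lemma quadForm_le (hf : IsSortedGroundState G f) (hG : inClassSemiRegular d G)
    (hB : inClassSemiRegular d B) (hlt : IsSLOOrdering B 0 (· < ·)) :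
    quadForm B f ≤ dirichletLambda G * ∑ v, f v ^ 2 := by
  obtain ⟨p, hp⟩ := exists_isParentFun hG.1.1 0
  obtain ⟨q, hq⟩ := exists_isParentFun hB.1.1 0
  rw [← hf.eigenpair.quadForm_eq hG.1.degree_pos]
  exact hp.quadForm_le_of_monotone hq (hlt.monotone_parent hq) (hf.degree_eq hG hB hlt)
    hf.antitone

lemma dirichletLambda_le (hf : IsSortedGroundState G f) (hG : inClassSemiRegular d G)
    (hB : inClassSemiRegular d B) (hlt : IsSLOOrdering B 0 (· < ·)) :
    dirichletLambda B ≤ dirichletLambda G := by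
  refine le_of_mul_le_mul_right ?_ (sum_sq_pos_of_ne_zero hf.eigenpair.1)
  exact (dirichletLambda_mul_sum_sq_le_quadForm hB.1.degree_pos hB.1.2.1
    ((isDirichlet_congr (hf.degree_eq hG hB hlt)).2 hf.eigenpair.isDirichlet)).trans
    (hf.quadForm_le hG hB hlt)

lemma isDirichletEigenpair (hf : IsSortedGroundState G f) (hG : inClassSemiRegular d G)
    (hB : inClassSemiRegular d B) (hlt : IsSLOOrdering B 0 (· < ·))
    (hle : dirichletLambda G ≤ dirichletLambda B) :
    IsDirichletEigenpair B (dirichletLambda G) f := by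
  have heq := hle.antisymm (hf.dirichletLambda_le hG hB hlt)
  rw [heq]
  exact isDirichletEigenpair_of_quadForm_le hB.1.degree_pos hB.1.2.1
    ((isDirichlet_congr (hf.degree_eq hG hB hlt)).2 hf.eigenpair.isDirichlet) hf.eigenpair.1
    (heq ▸ hf.quadForm_le hG hB hlt)

end IsSortedGroundState

section Agreement

variable [NeZero n] {p q : Fin n → Fin n}

lemma IsParentFun.exists_parent_eq_of_agree (hp : IsParentFun G 0 p) (hq : IsParentFun B 0 q)
    (hmono : Monotone q) (hdeg : ∀ v, B.degree v = G.degree v) (h0 : IsInterior B 0)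
    (hf : Antitone f) {μ : ℝ} (hG : IsDirichletEigenpair G μ f) (hB : IsDirichletEigenpair B μ f)
    {j : Fin n} (hj : j ≠ 0) (hagree : ∀ i < j, p i = q i) :
    ∃ x, j ≤ x ∧ p x = q j ∧ f x = f j := by
  by_cases hpj : p j = q j
  · exact ⟨j, le_rfl, hpj, rfl⟩
  have hsum := hp.sum_fiber_eq hq hdeg hG hB (hq.isInterior_parent h0 j)
    (hagree _ (hq.parent_lt hmono hj))
  have le_of_ne : ∀ i, p i ≠ q i → j ≤ i := fun i hi => by
    by_contra! hlt
    exact hi (hagree i hlt)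
  -- The children of `q j` that `p` moves elsewhere precede those it brings in, so equal sums of the
  -- antitone `f` force equal values.
  have le_of_fiber : ∀ i ∈ univ.filter (q · = q j) \ univ.filter (p · = q j),
      ∀ k ∈ univ.filter (p · = q j) \ univ.filter (q · = q j), i ≤ k := by
    intro i hi k hk
    simp only [mem_sdiff, mem_filter, mem_univ, true_and] at hi hk
    have hjk : q j ≤ q k := hmono (le_of_ne k (by grind))
    exact (hmono.reflect_lt (hi.1.trans_lt (hjk.lt_of_ne' hk.2))).le
  obtain ⟨x, hx, hfx⟩ := exists_eq_of_sum_eq_of_antitone hf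
    (hp.card_fiber_eq hq hdeg (q j)).symm hsum.symm le_of_fiber (i := j) (by simpa using hpj)
  simp only [mem_sdiff, mem_filter, mem_univ, true_and] at hx
  exact ⟨x, le_of_ne x (by grind), hx.1, hfx⟩

lemma IsParentFun.exists_iso_agree_succ (hp : IsParentFun G 0 p) (hq : IsParentFun B 0 q)
    (hmono : Monotone q) {j x : Fin n} (hj : j ≠ 0) (hjx : j ≤ x) (hx : p x = q j)
    (hagree : ∀ i < j, p i = q i) (hfx : f x = f j) :
    ∃ (G' : SimpleGraph (Fin n)) (p' : Fin n → Fin n) (e : G' ≃g G),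
      f ∘ e = f ∧ IsParentFun G' 0 p' ∧ ∀ i ≤ j, p' i = q i := by
  let σ := Equiv.swap j x
  let e : G.comap σ ≃g G := .comap σ G
  have fix : ∀ i < j, σ i = i := fun i hi =>
    Equiv.swap_apply_of_ne_of_ne hi.ne (hi.trans_le hjx).ne
  have parent_lt : ∀ i ≤ j, q i < j := fun i hi => by
    by_cases hi0 : i = 0
    · rw [hi0, hq.map_root]
      exact Fin.pos_iff_ne_zero.2 hj
    · exact (hq.parent_lt hmono hi0).trans_le hi
  refine ⟨G.comap σ, σ ∘ p ∘ σ, e, funext fun i => ?_, ?_, fun i hi => ?_⟩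
  · exact Equiv.apply_swap_eq_self hfx.symm i
  · have h := hp.map e.symm
    have hroot : e.symm 0 = 0 := fix 0 (Fin.pos_iff_ne_zero.2 hj)
    rw [hroot] at h
    exact h
  · rcases hi.eq_or_lt with rfl | hlt
    · simp only [σ, Function.comp_apply, Equiv.swap_apply_left, hx]
      exact fix _ (parent_lt _ le_rfl)
    · simp only [Function.comp_apply, fix i hlt, hagree i hlt]
      exact fix _ (parent_lt i hi)

end Agreement

variable [NeZero n]

lemma exists_iso_isSortedGroundState_agree (hG : inClassSemiRegular d G)
    (hB : inClassSemiRegular d B) (hlt : IsSLOOrdering B 0 (· < ·))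
    (hle : dirichletLambda G ≤ dirichletLambda B) {q : Fin n → Fin n} (hq : IsParentFun B 0 q)
    (m : ℕ) :
    ∃ (G' : SimpleGraph (Fin n)) (p : Fin n → Fin n) (f : Fin n → ℝ),
      Nonempty (G' ≃g G) ∧ IsSortedGroundState G' f ∧ IsParentFun G' 0 p ∧
        ∀ i : Fin n, (i : ℕ) < m → p i = q i := by
  induction m with
  | zero =>
    obtain ⟨G', f, ⟨e⟩, hf⟩ := exists_iso_isSortedGroundState hG.1.degree_pos hG.1.2.1
    obtain ⟨p, hp⟩ := exists_isParentFun (e.isTree_iff.2 hG.1.1) 0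
    exact ⟨G', p, f, ⟨e⟩, hf, hp, fun i hi => absurd hi (Nat.not_lt_zero i)⟩
  | succ m ih =>
    obtain ⟨G', p, f, ⟨e⟩, hf, hp, hagree⟩ := ih
    by_cases hm : 0 < m ∧ m < n
    · let j : Fin n := ⟨m, hm.2⟩
      have hj : j ≠ 0 := Fin.val_ne_zero_iff.1 hm.1.ne'
      have hG' := hG.map_iso e.symm
      have h0 : IsInterior B 0 := by
        obtain ⟨v, hv⟩ := hB.1.2.1
        exact hlt.isLowerSet_isInterior hB.1.degree_pos (Fin.zero_le v) hv
      have hfB := hf.isDirichletEigenpair hG' hB hlt (dirichletLambda_iso e ▸ hle)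
      obtain ⟨x, hjx, hx, hfx⟩ := hp.exists_parent_eq_of_agree hq (hlt.monotone_parent hq)
        (hf.degree_eq hG' hB hlt) h0 hf.antitone hf.eigenpair hfB hj hagree
      obtain ⟨G'', p', e', hfe, hp', hagree'⟩ :=
        hp.exists_iso_agree_succ hq (hlt.monotone_parent hq) hj hjx hx hagree hfx
      exact ⟨G'', p', f, ⟨e'.trans e⟩, hf.comp_iso e' hfe, hp',
        fun i hi => hagree' i (Nat.lt_succ_iff.1 hi)⟩
    · refine ⟨G', p, f, ⟨e⟩, hf, hp, fun i hi => ?_⟩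
      rcases (Nat.lt_succ_iff.1 hi).lt_or_eq with hlt' | heq
      · exact hagree i hlt'
      · have hi0 : i = 0 := Fin.ext (by rw [Fin.val_zero]; lia)
        rw [hi0, hp.map_root, hq.map_root]

lemma IsSLOOrdering.nonempty_iso (hlt : IsSLOOrdering B 0 (· < ·))
    (hB : inClassSemiRegular d B) (hG : inClassSemiRegular d G)
    (hle : dirichletLambda G ≤ dirichletLambda B) : Nonempty (B ≃g G) := by
  obtain ⟨q, hq⟩ := exists_isParentFun hB.1.1 0
  obtain ⟨G', p, f, hiso, -, hp, hagree⟩ :=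
    exists_iso_isSortedGroundState_agree hG hB hlt hle hq n
  have hpq : p = q := funext fun i => hagree i i.isLt
  have hGB : G' = B := by
    ext u v
    rw [hp.adj_iff, hq.adj_iff, hpq]
  exact hGB ▸ hiso

end Comparison

section SLOStar

variable {n d : ℕ} {G B : SimpleGraph (Fin n)}

lemma inClassSemiRegular.neZero (hG : inClassSemiRegular d G) : NeZero n :=
  have ⟨v, _⟩ := hG.1.2.1
  ⟨(Fin.pos v).ne'⟩

lemma IsSLOStarTree.exists_iso_isSLOOrdering_lt [NeZero n] (hSLO : IsSLOStarTree B) :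
    ∃ B' : SimpleGraph (Fin n), Nonempty (B' ≃g B) ∧ IsSLOOrdering B' 0 (· < ·) :=
  have ⟨hB, _, _, hlt, _⟩ := hSLO
  hlt.exists_iso_lt hB.1.connected

lemma inClassSemiRegular.isSLOStarTree_of_iso (hB : inClassSemiRegular d B) (hSLO : IsSLOStarTree B)
    (e : B ≃g G) : IsSLOStarTree G :=
  have ⟨_, _, hlt⟩ := hB.isSLOStarTree_iff.1 hSLO
  (hB.map_iso e).isSLOStarTree_iff.2 ⟨_, _, hlt.map_iso hB.1.1.connected e⟩

lemma inClassSemiRegular.exists_isSLOStarTree (hG : inClassSemiRegular d G) :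
    ∃ B : SimpleGraph (Fin n), inClassSemiRegular d B ∧ IsSLOStarTree B :=
  have := hG.neZero
  have ⟨B, hB, hlt⟩ := hG.exists_isSLOOrdering_lt
  ⟨B, hB, hB.isSLOStarTree_iff.2 ⟨_, _, hlt⟩⟩

lemma IsSLOStarTree.dirichletLambda_le (hSLO : IsSLOStarTree B) (hB : inClassSemiRegular d B)
    (hG : inClassSemiRegular d G) : dirichletLambda B ≤ dirichletLambda G := by
  have := hG.neZero
  obtain ⟨B', ⟨e⟩, hlt⟩ := hSLO.exists_iso_isSLOOrdering_lt
  obtain ⟨G', f, ⟨e'⟩, hf⟩ := exists_iso_isSortedGroundState hG.1.degree_pos hG.1.2.1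
  rw [← dirichletLambda_iso e, ← dirichletLambda_iso e']
  exact hf.dirichletLambda_le (hG.map_iso e'.symm) (hB.map_iso e.symm) hlt

lemma IsSLOStarTree.nonempty_iso_of_dirichletLambda_le (hSLO : IsSLOStarTree B)
    (hB : inClassSemiRegular d B) (hG : inClassSemiRegular d G)
    (hle : dirichletLambda G ≤ dirichletLambda B) : Nonempty (B ≃g G) := by
  have := hG.neZero
  obtain ⟨B', ⟨e⟩, hlt⟩ := hSLO.exists_iso_isSLOOrdering_lt
  obtain ⟨e'⟩ := hlt.nonempty_iso (hB.map_iso e.symm) hG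
    (dirichletLambda_iso e ▸ hle)
  exact ⟨e.symm.trans e'⟩

end SLOStar

/-- **Corollary (Pruss).** In the class of semi-`d`-regular trees with boundary
with `n` vertices, a tree `G` has the Faber-Krahn property if and only if it is
an SLO*-tree; `G` is then uniquely determined up to isomorphism. -/
theorem faberKrahn_semiRegular (n d : ℕ) (hd : 2 ≤ d)
    (G : SimpleGraph (Fin n)) (hG : inClassSemiRegular d G) :
    (hasFKSemiRegular d G ↔ IsSLOStarTree G) ∧
    (hasFKSemiRegular d G → ∀ G' : SimpleGraph (Fin n), hasFKSemiRegular d G' →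
        Nonempty (G ≃g G')) := by
  have hiff : hasFKSemiRegular d G ↔ IsSLOStarTree G := by
    refine ⟨fun hFK => ?_, fun hSLO => ⟨hG, fun _ => hSLO.dirichletLambda_le hG⟩⟩
    obtain ⟨B, hB, hSLO⟩ := hG.exists_isSLOStarTree
    obtain ⟨e⟩ := hSLO.nonempty_iso_of_dirichletLambda_le hB hG (hFK.2 B hB)
    exact hB.isSLOStarTree_of_iso hSLO e
  refine ⟨hiff, fun hFK G' hFK' => ?_⟩
  exact (hiff.1 hFK).nonempty_iso_of_dirichletLambda_le hG hFK'.1 (hFK'.2 G hG)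

end FK
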